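/- Let p and q be integers with 4 < p ≤ q and p not dividing q; write q = kp + r with 0 < r < p, and set m = gcd(p,q) and ν = (p−1)(q−1). Then every integer n with (p−1)(kp−1) ≤ n ≤ ν is attainable from T = {(p,0),(0,q)}, with the possible exception of: integers n with ν − m < n < ν, in case p is odd or r ≠ p−1; and the single integer n = ν − p, in case p is even and r = p−1. -/

import Mathlib

open Pointwise MeasureTheory

/-- The Newton polyhedron `Γ₊(T)`: the Minkowski sum of the convex hull of the
(real images of the) lattice points of `T` with the nonnegative quadrant. -/
noncomputable def GammaPlus (T : Finset (ℕ × ℕ)) : Set (ℝ × ℝ) :=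
  convexHull ℝ ((fun v : ℕ × ℕ => ((v.1 : ℝ), (v.2 : ℝ))) '' (T : Set (ℕ × ℕ))) +
    {v : ℝ × ℝ | 0 ≤ v.1 ∧ 0 ≤ v.2}

/-- `a(T)`: the smallest `x` with `(x,0) ∈ Γ₊(T)`. -/
noncomputable def axisA (T : Finset (ℕ × ℕ)) : ℝ :=
  sInf {x : ℝ | (x, (0 : ℝ)) ∈ GammaPlus T}

/-- `b(T)`: the smallest `y` with `(0,y) ∈ Γ₊(T)`. -/
noncomputable def axisB (T : Finset (ℕ × ℕ)) : ℝ :=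
  sInf {y : ℝ | ((0 : ℝ), y) ∈ GammaPlus T}

/-- `S(T)`: the Lebesgue area of the part of the nonnegative quadrant not in `Γ₊(T)`. -/
noncomputable def areaS (T : Finset (ℕ × ℕ)) : ℝ :=
  (volume ({v : ℝ × ℝ | 0 ≤ v.1 ∧ 0 ≤ v.2} \ GammaPlus T)).toReal

/-- The Newton number `ν(T) = 2 S(T) - a(T) - b(T) + 1`. -/
noncomputable def newtonNumber (T : Finset (ℕ × ℕ)) : ℝ :=
  2 * areaS T - axisA T - axisB T + 1

/-- An integer `n` is attainable from `T` if `n = ν(T ∪ P)` for some finite `P ⊆ ℕ²`. -/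
def Attainable (T : Finset (ℕ × ℕ)) (n : ℤ) : Prop :=
  ∃ P : Finset (ℕ × ℕ), (n : ℝ) = newtonNumber (T ∪ P)

/-!
Let `k * p ≤ q' ≤ q`. If `S` is a set of lattice points below the chord from `(0, q')` to `(p, 0)`
and above the axes, then the Newton number of `S` together with the ends of the chord is
`(p - 1) * (q' - 1) - D`, where `D` is twice the area of the convex hull of these points, and adding
`(0, q)` does not change it. So one needs lattice caps of prescribed doubled area `D` below a chord.

They exist whenever `D` is less than the width of the chord and `D` is `0` or at least the lattice
length `l` of the chord. By induction on `D`: write the chord as `l • u` with `u` primitive. If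
`l = 1`, a single triangle does. Otherwise let `a`, `b` be neighbours of `u` in the Farey sequence
that makes `l • u = A • a + B • b` with `A, B ≤ D < A + B`. If `A ≤ B`, a cap of doubled area
`D - A` on the chord `A • a + (B - 1) • b` is extended by one triangle of doubled area `A`; since
`D < A + B`, the line along the new edge `b` does not cut the smaller cap. If `B ≤ A`, use the
mirror image.

Letting `q'` vary, this leaves only the values `(p - 1) * (q' - 1) - D` with `k * p < q'` and
`0 < D < gcd p q'`. For `q' < q` these come from caps below the chord from `(0, q' + 1)` whose last
edge has slope `-k`, unless `p` is even and `q' = k * p + p - 2`, which is the exception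
`n = ν - p`; for `q' = q` they are the exceptions `ν - m < n < ν`.
-/

section SignedArea

variable {R : Type*} [CommRing R]

/-- The determinant of the `2 × 2` matrix with columns `a` and `b`. -/
def wedge (a b : R × R) : R := a.1 * b.2 - a.2 * b.1

/-- Twice the area of the triangle `ABC`, positive when `A`, `B`, `C` is counterclockwise. -/
def signedArea (A B C : R × R) : R := wedge (B - A) (C - A)

theorem wedge_skew (a b : R × R) : wedge a b = -wedge b a := by
  simp only [wedge]
  ring

@[simp] theorem wedge_self (a : R × R) : wedge a a = 0 := by
  simp only [wedge, mul_comm, sub_self]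

theorem wedge_sub_left (a b c : R × R) : wedge (a - b) c = wedge a c - wedge b c := by
  simp only [wedge, Prod.fst_sub, Prod.snd_sub]
  ring

theorem wedge_sub_right (a b c : R × R) : wedge a (b - c) = wedge a b - wedge a c := by
  simp only [wedge, Prod.fst_sub, Prod.snd_sub]
  ring

theorem eq_wedge_smul_add_wedge_smul {a b : R × R} (hab : wedge a b = 1) (v : R × R) :
    v = wedge v b • a + wedge a v • b := by
  simp only [wedge] at hab ⊢
  ext
  · simp only [Prod.fst_add, Prod.smul_fst, smul_eq_mul]
    linear_combination -v.1 * hab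
  · simp only [Prod.snd_add, Prod.smul_snd, smul_eq_mul]
    linear_combination -v.2 * hab

theorem signedArea_rotate (A B C : R × R) : signedArea A B C = signedArea B C A := by
  simp only [signedArea, wedge, Prod.fst_sub, Prod.snd_sub]
  ring

theorem signedArea_swap (A B C : R × R) : signedArea A C B = -signedArea A B C := by
  simp only [signedArea, wedge, Prod.fst_sub, Prod.snd_sub]
  ring

theorem signedArea_add_signedArea_add_signedArea (A B C v : R × R) :
    signedArea v B C + signedArea A v C + signedArea A B v = signedArea A B C := by
  simp only [signedArea, wedge, Prod.fst_sub, Prod.snd_sub]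
  ring

theorem signedArea_smul_eq_barycentric (A B C v : R × R) :
    signedArea A B C • v =
      signedArea v B C • A + signedArea A v C • B + signedArea A B v • C := by
  ext <;>
  · simp only [signedArea, wedge, Prod.fst_sub, Prod.snd_sub, Prod.fst_add, Prod.snd_add,
      Prod.smul_fst, Prod.smul_snd, smul_eq_mul]
    ring

end SignedArea

section Triangle

variable {A B C v : ℝ × ℝ} {K : Set (ℝ × ℝ)}

theorem convex_le_linear (a b c : ℝ) : Convex ℝ {v : ℝ × ℝ | c ≤ a * v.1 + b * v.2} :=
  convex_halfSpace_ge (f := fun v : ℝ × ℝ => a * v.1 + b * v.2)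
    ⟨fun v w => by simp only [Prod.fst_add, Prod.snd_add]; ring,
      fun t v => by simp only [Prod.smul_fst, Prod.smul_snd, smul_eq_mul]; ring⟩ c

theorem convex_signedArea_nonneg (A B : ℝ × ℝ) : Convex ℝ {v | 0 ≤ signedArea A B v} := by
  convert convex_le_linear (A.2 - B.2) (B.1 - A.1) (A.2 * B.1 - A.1 * B.2) using 3
  rw [← sub_nonneg (b := A.2 * B.1 - A.1 * B.2)]
  simp only [signedArea, wedge, Prod.fst_sub, Prod.snd_sub]
  ring_nf

theorem mem_of_convex_of_signedArea_nonneg (hK : Convex ℝ K) (hA : A ∈ K) (hB : B ∈ K) (hC : C ∈ K)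
    (hABC : 0 < signedArea A B C) (hvA : 0 ≤ signedArea v B C) (hvB : 0 ≤ signedArea A v C)
    (hvC : 0 ≤ signedArea A B v) : v ∈ K := by
  set D := signedArea A B C
  have hv : v = ∑ i, ![signedArea v B C / D, signedArea A v C / D, signedArea A B v / D] i •
      ![A, B, C] i := by
    have := congrArg (D⁻¹ • ·) (signedArea_smul_eq_barycentric A B C v)
    simpa [Fin.sum_univ_three, D, smul_smul, hABC.ne', div_eq_inv_mul] using this
  rw [hv]
  refine hK.sum_mem (fun i _ => ?_) ?_ (fun i _ => ?_)
  · fin_cases i <;> exact div_nonneg ‹_› hABC.le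
  · simp only [Fin.sum_univ_three, Matrix.cons_val]
    rw [← add_div, ← add_div, signedArea_add_signedArea_add_signedArea, div_self hABC.ne']
  · fin_cases i <;> assumption

theorem mem_convexHull_triple_iff (hABC : 0 < signedArea A B C) :
    v ∈ convexHull ℝ {A, B, C} ↔
      0 ≤ signedArea v B C ∧ 0 ≤ signedArea A v C ∧ 0 ≤ signedArea A B v := by
  refine ⟨fun hv => ?_, fun ⟨hvA, hvB, hvC⟩ => ?_⟩
  · have nonneg_on_hull {X Y : ℝ × ℝ} (h : ∀ w ∈ ({A, B, C} : Set (ℝ × ℝ)), 0 ≤ signedArea X Y w) :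
        0 ≤ signedArea X Y v := convexHull_min h (convex_signedArea_nonneg X Y) hv
    rw [signedArea_rotate v B C, ← signedArea_rotate C A v]
    refine ⟨nonneg_on_hull ?_, nonneg_on_hull ?_, nonneg_on_hull ?_⟩ <;>
    · simp only [signedArea, wedge, Prod.fst_sub, Prod.snd_sub, Set.mem_insert_iff,
        Set.mem_singleton_iff, forall_eq_or_imp, forall_eq] at hABC ⊢
      refine ⟨?_, ?_, ?_⟩ <;> linarith
  · exact mem_of_convex_of_signedArea_nonneg (convex_convexHull ℝ _)
      (subset_convexHull ℝ _ (by simp)) (subset_convexHull ℝ _ (by simp))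
      (subset_convexHull ℝ _ (by simp)) hABC hvA hvB hvC

theorem mem_segment_of_signedArea_eq_zero (hABC : 0 < signedArea A B C)
    (hv : v ∈ convexHull ℝ {A, B, C}) (h0 : signedArea A B v = 0) : v ∈ segment ℝ A B := by
  obtain ⟨hvA, hvB, -⟩ := (mem_convexHull_triple_iff hABC).1 hv
  refine ⟨_, _, div_nonneg hvA hABC.le, div_nonneg hvB hABC.le, ?_, ?_⟩
  · rw [← add_div, div_eq_one_iff_eq hABC.ne',
      ← signedArea_add_signedArea_add_signedArea A B C v, h0, add_zero]
  · apply smul_right_injective _ hABC.ne'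
    simp only [signedArea_smul_eq_barycentric A B C v, h0, zero_smul, add_zero, smul_add,
      smul_smul, mul_div_cancel₀ _ hABC.ne']

theorem volume_convexHull_unit_triangle :
    volume (convexHull ℝ {((0 : ℝ), (0 : ℝ)), (1, 0), (0, 1)}) = ENNReal.ofReal (1 / 2) := by
  set T := convexHull ℝ {((0 : ℝ), (0 : ℝ)), (1, 0), (0, 1)}
  have hT (v : ℝ × ℝ) : v ∈ T ↔ 0 ≤ 1 - v.1 - v.2 ∧ 0 ≤ v.1 ∧ 0 ≤ v.2 := by
    rw [mem_convexHull_triple_iff (by norm_num [signedArea, wedge])]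
    simp only [signedArea, wedge, Prod.fst_sub, Prod.snd_sub]
    ring_nf
  have hclosed : IsClosed T := Set.Finite.isClosed_convexHull ℝ (Set.toFinite _)
  have hslice : ∀ x : ℝ, volume (Prod.mk x ⁻¹' T) =
      (Set.Icc 0 1).indicator (fun x => ENNReal.ofReal (1 - x)) x := by
    intro x
    by_cases hx : x ∈ Set.Icc (0 : ℝ) 1
    · have : Prod.mk x ⁻¹' T = Set.Icc 0 (1 - x) := by
        ext y
        simp only [Set.mem_preimage, hT, Set.mem_Icc]
        exact ⟨fun h => ⟨h.2.2, by linarith⟩, fun h => ⟨by linarith, hx.1, h.1⟩⟩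
      rw [Set.indicator_of_mem hx, this, Real.volume_Icc, sub_zero]
    · have : Prod.mk x ⁻¹' T = ∅ := by
        ext y
        simp only [Set.mem_preimage, hT, Set.mem_empty_iff_false, iff_false]
        exact fun h => hx ⟨h.2.1, by linarith⟩
      rw [Set.indicator_of_notMem hx, this, measure_empty]
  rw [Measure.volume_eq_prod, Measure.prod_apply hclosed.measurableSet, lintegral_congr hslice,
    lintegral_indicator measurableSet_Icc, ← ofReal_integral_eq_lintegral_ofReal
      (by fun_prop : Continuous fun x : ℝ => 1 - x).continuousOn.integrableOn_Icc
      (ae_restrict_of_forall_mem measurableSet_Icc fun x hx => sub_nonneg.2 hx.2),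
    integral_Icc_eq_integral_Ioc, ← intervalIntegral.integral_of_le zero_le_one,
    intervalIntegral.integral_sub (by simp) (by simp), integral_id]
  norm_num

theorem volume_real_convexHull_triple (A B C : ℝ × ℝ) :
    volume.real (convexHull ℝ {A, B, C}) = |signedArea A B C| / 2 := by
  let L : ℝ × ℝ →ₗ[ℝ] ℝ × ℝ :=
    Matrix.toLin (Module.Basis.finTwoProd ℝ) (Module.Basis.finTwoProd ℝ)
      !![(B - A).1, (C - A).1; (B - A).2, (C - A).2]
  have hdet : LinearMap.det L = signedArea A B C := by
    simp only [L, LinearMap.det_toLin, Matrix.det_fin_two_of, signedArea, wedge]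
    ring
  have himage : convexHull ℝ {A, B, C} =
      A +ᵥ L '' convexHull ℝ {((0 : ℝ), (0 : ℝ)), (1, 0), (0, 1)} := by
    have hB : A + ((B - A).1, (B - A).2) = B := add_sub_cancel A B
    have hC : A + ((C - A).1, (C - A).2) = C := add_sub_cancel A C
    have hA : A + (0, 0) = A := add_zero A
    rw [LinearMap.image_convexHull, ← convexHull_vadd]
    simp [L, Matrix.toLin_finTwoProd_apply, Set.image_insert_eq, Set.vadd_set_insert, -Prod.fst_sub,
      -Prod.snd_sub, hA, hB, hC]
  rw [measureReal_def, himage, measure_vadd, Measure.addHaar_image_linearMap, hdet,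
    volume_convexHull_unit_triangle, ENNReal.toReal_mul, ENNReal.toReal_ofReal (abs_nonneg _),
    ENNReal.toReal_ofReal (by norm_num)]
  ring

theorem volume_segment_eq_zero (A B : ℝ × ℝ) : volume (segment ℝ A B) = 0 := by
  have hclosed : IsCompact (segment ℝ A B) := by
    rw [← convexHull_pair]
    exact Set.Finite.isCompact_convexHull ℝ (Set.toFinite _)
  have h := volume_real_convexHull_triple A A B
  rw [Set.insert_eq_of_mem (Set.mem_insert A {B}), convexHull_pair] at h
  rw [← measureReal_eq_zero_iff hclosed.measure_ne_top, h]
  simp [signedArea, wedge]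

/-- The segment from `N` to a point of `K` crosses the chord `AB`, so a point of it lies in the
triangle `ABN` or in a triangle with base `AB` and apex in `K`. -/
theorem mem_union_triangle_of_mem_segment {N y : ℝ × ℝ} (hK : Convex ℝ K) (hA : A ∈ K) (hB : B ∈ K)
    (hN : 0 < signedArea A B N) (hv : v ∈ K) (hv0 : 0 ≤ signedArea A v B)
    (hvA : 0 ≤ signedArea v B N) (hvB : 0 ≤ signedArea A v N) (hy : y ∈ segment ℝ N v) :
    y ∈ K ∪ convexHull ℝ {A, B, N} := by
  obtain ⟨a, b, ha, hb, hab, rfl⟩ := hy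
  obtain rfl : a = 1 - b := by linarith
  set y := (1 - b) • N + b • v with hy
  obtain ⟨hyAB, hyA, hyB, hyvA, hyvB⟩ :
      signedArea A B y = (1 - b) * signedArea A B N - b * signedArea A v B ∧
      signedArea y B N = b * signedArea v B N ∧ signedArea A y N = b * signedArea A v N ∧
      signedArea y v B = (1 - b) * signedArea v B N ∧
      signedArea A v y = (1 - b) * signedArea A v N := by
    refine ⟨?_, ?_, ?_, ?_, ?_⟩ <;>
    · simp only [hy, signedArea, wedge, Prod.fst_sub, Prod.snd_sub, Prod.fst_add, Prod.snd_add,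
        Prod.smul_fst, Prod.smul_snd, smul_eq_mul]
      ring
  rcases le_total 0 (signedArea A B y) with hy0 | hy0
  · exact .inr ((mem_convexHull_triple_iff hN).2
      ⟨hyA ▸ mul_nonneg hb hvA, hyB ▸ mul_nonneg hb hvB, hy0⟩)
  rcases hv0.eq_or_lt with hv0 | hv0
  · have hb1 : 1 - b = 0 := by
      rw [hyAB, ← hv0, mul_zero, sub_zero] at hy0
      exact (nonpos_of_mul_nonpos_left hy0 hN).antisymm ha
    obtain rfl : b = 1 := by linarith
    exact .inl (by simpa [hy] using hv)
  · refine .inl (mem_of_convex_of_signedArea_nonneg hK hA hv hB hv0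
      (hyvA ▸ mul_nonneg ha hvA) ?_ (hyvB ▸ mul_nonneg ha hvB))
    rwa [← neg_nonneg, ← signedArea_swap] at hy0

theorem convexHull_insert_eq_union_triangle {N : ℝ × ℝ} (hK : Convex ℝ K) (hA : A ∈ K) (hB : B ∈ K)
    (hN : 0 < signedArea A B N)
    (hvis : ∀ v ∈ K, 0 ≤ signedArea A v B ∧ 0 ≤ signedArea v B N ∧ 0 ≤ signedArea A v N) :
    convexHull ℝ (insert N K) = K ∪ convexHull ℝ {A, B, N} := by
  apply subset_antisymm
  · intro y hy
    rw [convexHull_insert ⟨A, hA⟩, hK.convexHull_eq] at hy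
    simp only [mem_convexJoin, Set.mem_singleton_iff, exists_eq_left] at hy
    obtain ⟨v, hv, hy⟩ := hy
    obtain ⟨hv0, hvA, hvB⟩ := hvis v hv
    exact mem_union_triangle_of_mem_segment hK hA hB hN hv hv0 hvA hvB hy
  · refine Set.union_subset ((Set.subset_insert _ _).trans (subset_convexHull ℝ _))
      (convexHull_mono ?_)
    rintro _ (rfl | rfl | rfl)
    exacts [.inr hA, .inr hB, .inl rfl]

theorem volume_real_convexHull_insert {N : ℝ × ℝ} {s : Set (ℝ × ℝ)}
    (hvol : volume (convexHull ℝ s) ≠ ⊤) (hA : A ∈ s) (hB : B ∈ s) (hN : 0 < signedArea A B N)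
    (hvis : ∀ v ∈ s, 0 ≤ signedArea A v B ∧ 0 ≤ signedArea v B N ∧ 0 ≤ signedArea A v N) :
    volume.real (convexHull ℝ (insert N s)) =
      volume.real (convexHull ℝ s) + signedArea A B N / 2 := by
  have hT : IsCompact (convexHull ℝ {A, B, N}) := Set.Finite.isCompact_convexHull ℝ (Set.toFinite _)
  replace hvis : ∀ v ∈ convexHull ℝ s,
      0 ≤ signedArea A v B ∧ 0 ≤ signedArea v B N ∧ 0 ≤ signedArea A v N := by
    have key {X Y : ℝ × ℝ} (h : ∀ v ∈ s, 0 ≤ signedArea X Y v) :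
        ∀ v ∈ convexHull ℝ s, 0 ≤ signedArea X Y v :=
      fun v hv => convexHull_min h (convex_signedArea_nonneg X Y) hv
    simp only [signedArea_rotate _ B N, ← signedArea_rotate _ A] at hvis ⊢
    exact fun v hv => ⟨key (fun w hw => (hvis w hw).1) v hv,
      key (fun w hw => (hvis w hw).2.1) v hv, key (fun w hw => (hvis w hw).2.2) v hv⟩
  have hinter : convexHull ℝ s ∩ convexHull ℝ {A, B, N} ⊆ segment ℝ A B := by
    rintro v ⟨hvK, hvT⟩
    refine mem_segment_of_signedArea_eq_zero hN hvT (le_antisymm ?_ ?_)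
    · rw [← neg_nonneg, ← signedArea_swap]
      exact (hvis v hvK).1
    · exact ((mem_convexHull_triple_iff hN).1 hvT).2.2
  have hunion := convexHull_insert_eq_union_triangle (convex_convexHull ℝ s)
    (subset_convexHull ℝ s hA) (subset_convexHull ℝ s hB) hN hvis
  rw [Set.insert_eq, convexHull_convexHull_union_right, ← Set.insert_eq] at hunion
  rw [hunion, measureReal_union₀ hT.isClosed.measurableSet.nullMeasurableSet
      (measure_mono_null hinter (volume_segment_eq_zero A B)) hvol hT.measure_ne_top,
    volume_real_convexHull_triple, abs_of_pos hN]

end Triangle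

section Cap

/-- The inclusion of the lattice `ℤ²` in the plane. -/
def toPlane (v : ℤ × ℤ) : ℝ × ℝ := (v.1, v.2)

theorem signedArea_toPlane (P Q R : ℤ × ℤ) :
    signedArea (toPlane P) (toPlane Q) (toPlane R) = signedArea P Q R := by
  simp [toPlane, signedArea, wedge]

/-- `S` spans a cap of doubled area `D` below the chord `PQ`: its points lie strictly between the
vertical lines through `P` and `Q`, on or below the chord, and the convex hull of `S` together with
the ends of the chord has area `D / 2`. -/
structure IsCap (P Q : ℤ × ℤ) (S : Finset (ℤ × ℤ)) (D : ℤ) : Prop where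
  fst_mem : ∀ v ∈ S, v.1 ∈ Set.Ioo P.1 Q.1
  signedArea_nonneg : ∀ v ∈ S, 0 ≤ signedArea P v Q
  volume_real : volume.real (convexHull ℝ (toPlane '' insert P (insert Q ↑S))) = D / 2

variable {P Q C : ℤ × ℤ} {S : Finset (ℤ × ℤ)} {D : ℤ}

theorem isCap_empty (P Q : ℤ × ℤ) : IsCap P Q ∅ 0 where
  fst_mem := by simp
  signedArea_nonneg := by simp
  volume_real := by
    simp [Set.image_pair, convexHull_pair, measureReal_def, volume_segment_eq_zero]

theorem isCompact_convexHull_toPlane_image {s : Set (ℤ × ℤ)} (hs : s.Finite) :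
    IsCompact (convexHull ℝ (toPlane '' s)) :=
  (hs.image _).isCompact_convexHull ℝ

theorem IsCap.nonneg (h : IsCap P Q S D) : 0 ≤ D := by
  have : (0 : ℝ) ≤ D / 2 := h.volume_real ▸ measureReal_nonneg
  exact_mod_cast (by linarith : (0 : ℝ) ≤ D)

theorem IsCap.signedArea_le (h : IsCap P Q S D) {v : ℤ × ℤ} (hv : v ∈ S) :
    signedArea P v Q ≤ D := by
  have hsub : {toPlane P, toPlane v, toPlane Q} ⊆
      toPlane '' insert P (insert Q (S : Set (ℤ × ℤ))) := by
    rintro _ (rfl | rfl | rfl) <;> exact Set.mem_image_of_mem _ (by simp [hv])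
  have hle := measureReal_mono (μ := volume) (convexHull_mono (𝕜 := ℝ) hsub)
    (isCompact_convexHull_toPlane_image ((S.finite_toSet.insert Q).insert P)).measure_ne_top
  rw [h.volume_real, volume_real_convexHull_triple, signedArea_toPlane] at hle
  have := (le_abs_self _).trans (le_of_mul_le_mul_right hle (by norm_num : (0 : ℝ) < 2⁻¹))
  exact_mod_cast this

/-- The mirror image in the vertical axis. -/
def reflect (v : ℤ × ℤ) : ℤ × ℤ := (-v.1, v.2)

theorem signedArea_reflect (P Q R : ℤ × ℤ) :
    signedArea (reflect P) (reflect Q) (reflect R) = -signedArea P Q R := by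
  simp only [reflect, signedArea, wedge, Prod.fst_sub, Prod.snd_sub]
  ring

theorem volume_real_convexHull_reflect (s : Set (ℤ × ℤ)) :
    volume.real (convexHull ℝ (toPlane '' (reflect '' s))) =
      volume.real (convexHull ℝ (toPlane '' s)) := by
  let L : ℝ × ℝ →ₗ[ℝ] ℝ × ℝ := (-LinearMap.id).prodMap LinearMap.id
  have hL : toPlane '' (reflect '' s) = L '' (toPlane '' s) := by
    simp [Set.image_image, toPlane, reflect, L]
  rw [hL, ← LinearMap.image_convexHull, measureReal_def, Measure.addHaar_image_linearMap]
  simp [L, LinearMap.det_prodMap, measureReal_def]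

theorem IsCap.reflect (h : IsCap P Q S D) :
    IsCap (reflect Q) (reflect P) (S.image reflect) D where
  fst_mem := by
    simp only [Finset.mem_image, forall_exists_index, and_imp, forall_apply_eq_imp_iff₂]
    exact fun v hv => ⟨neg_lt_neg (h.fst_mem v hv).2, neg_lt_neg (h.fst_mem v hv).1⟩
  signedArea_nonneg := by
    simp only [Finset.mem_image, forall_exists_index, and_imp, forall_apply_eq_imp_iff₂]
    intro v hv
    rw [signedArea_reflect, ← signedArea_swap, signedArea_rotate]
    exact h.signedArea_nonneg v hv
  volume_real := by
    rw [← h.volume_real, ← volume_real_convexHull_reflect (insert P _),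
      Set.image_insert_eq (a := P), Set.image_insert_eq (a := Q), Finset.coe_image,
      Set.insert_comm]

theorem IsCap.insert_right (h : IsCap P C S D) (hPC : P.1 < C.1) (hCQ : C.1 < Q.1)
    (hpos : 0 < signedArea P C Q) (hS : ∀ v ∈ S, 0 ≤ signedArea v C Q) :
    IsCap P Q (insert C S) (D + signedArea P C Q) := by
  have hSQ : ∀ v ∈ S, 0 ≤ signedArea P v Q := by
    intro v hv
    have hslopes : (C.1 - P.1) * signedArea P v Q =
        (Q.1 - P.1) * signedArea P v C + (v.1 - P.1) * signedArea P C Q := by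
      simp only [signedArea, wedge, Prod.fst_sub, Prod.snd_sub]
      ring
    refine nonneg_of_mul_nonneg_right (b := signedArea P v Q) ?_ (sub_pos.2 hPC)
    rw [hslopes]
    exact add_nonneg (mul_nonneg (by linarith) (h.signedArea_nonneg v hv))
      (mul_nonneg (sub_nonneg.2 (h.fst_mem v hv).1.le) hpos.le)
  refine ⟨?_, ?_, ?_⟩
  · simp only [Finset.forall_mem_insert]
    exact ⟨⟨hPC, hCQ⟩, fun v hv => ⟨(h.fst_mem v hv).1, (h.fst_mem v hv).2.trans hCQ⟩⟩
  · simp only [Finset.forall_mem_insert]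
    exact ⟨hpos.le, hSQ⟩
  · have hvis : ∀ v ∈ toPlane '' insert P (insert C (S : Set (ℤ × ℤ))),
        0 ≤ signedArea (toPlane P) v (toPlane C) ∧ 0 ≤ signedArea v (toPlane C) (toPlane Q) ∧
          0 ≤ signedArea (toPlane P) v (toPlane Q) := by
      simp only [Set.forall_mem_image, Set.forall_mem_insert, Finset.mem_coe, signedArea_toPlane]
      norm_cast
      exact ⟨⟨by simp [signedArea, wedge], hpos.le, by simp [signedArea, wedge]⟩,
        ⟨by simp [signedArea, wedge, mul_comm], by simp [signedArea, wedge], hpos.le⟩,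
        fun v hv => ⟨h.signedArea_nonneg v hv, hS v hv, hSQ v hv⟩⟩
    rw [Finset.coe_insert, Set.insert_comm P, Set.image_insert_eq, volume_real_convexHull_insert
      (isCompact_convexHull_toPlane_image ((S.finite_toSet.insert C).insert P)).measure_ne_top
      (Set.mem_image_of_mem _ (by simp)) (Set.mem_image_of_mem _ (by simp)) _ hvis,
      h.volume_real, signedArea_toPlane]
    · push_cast; ring
    · rw [signedArea_toPlane]; exact_mod_cast hpos

theorem wedge_nonneg_of_wedge_lt {a b w : ℤ × ℤ} {A B : ℤ} (hab : wedge a b = 1) (ha : 0 < a.1)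
    (hb : 0 < b.1) (hA : 0 ≤ A) (hB : 0 ≤ B) (hw : 0 < w.1)
    (h : wedge (A • a + B • b) w < A + B) : 0 ≤ wedge w b := by
  by_contra! hneg
  have hwedge : wedge (A • a + B • b) w = A * wedge a w - B * wedge w b := by
    simp only [wedge, Prod.fst_add, Prod.snd_add, Prod.smul_fst, Prod.smul_snd, smul_eq_mul]
    ring
  have hw1 : w.1 = wedge w b * a.1 + wedge a w * b.1 :=
    congrArg Prod.fst (eq_wedge_smul_add_wedge_smul hab w)
  have hpos : 0 < wedge a w := by
    by_contra! hle
    linarith [mul_neg_of_neg_of_pos hneg ha, mul_nonpos_of_nonpos_of_nonneg hle hb.le]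
  nlinarith

theorem IsCap.snoc {a b : ℤ × ℤ} {A B : ℤ} (hab : wedge a b = 1) (ha : 0 < a.1) (hb : 0 < b.1)
    (hA : 0 < A) (hB : 0 ≤ B) (h : IsCap P (P + A • a + B • b) S D) (hD : D < A + B) :
    IsCap P (P + A • a + (B + 1) • b) (insert (P + A • a + B • b) S) (D + A) := by
  set C := P + A • a + B • b with hC
  set Q := P + A • a + (B + 1) • b with hQ
  have hCQ : Q = C + b := by rw [hC, hQ, add_smul, one_smul, add_assoc _ (B • b)]
  have harea : signedArea P C Q = A := by
    simp only [signedArea, hC, hQ, wedge, Prod.fst_sub, Prod.snd_sub, Prod.fst_add, Prod.snd_add,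
      Prod.smul_fst, Prod.smul_snd, smul_eq_mul] at hab ⊢
    linear_combination A * hab
  rw [← harea]
  refine h.insert_right ?_ ?_ (harea ▸ hA) fun v hv => ?_
  · simp only [hC, Prod.fst_add, Prod.smul_fst, smul_eq_mul]
    nlinarith [mul_pos hA ha, mul_nonneg hB hb.le]
  · simpa [hCQ] using hb
  · have hvQ : signedArea v C Q = wedge (C - v) b := by
      simp only [hCQ, signedArea, wedge, Prod.fst_sub, Prod.snd_sub, Prod.fst_add, Prod.snd_add]
      ring
    have hvC : signedArea P v C = wedge (A • a + B • b) (C - v) := by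
      simp only [hC, signedArea, wedge, Prod.fst_sub, Prod.snd_sub, Prod.fst_add, Prod.snd_add]
      ring
    rw [hvQ]
    exact wedge_nonneg_of_wedge_lt hab ha hb hA.le hB (sub_pos.2 (h.fst_mem v hv).2)
      (hvC ▸ (h.signedArea_le hv).trans_lt hD)

end Cap

section Lattice

variable {u : ℤ × ℤ}

theorem exists_wedge_eq (hu : IsCoprime u.1 u.2) {d : ℤ} (hd0 : 0 < d) (hd : d < u.1) :
    ∃ c : ℤ × ℤ, 0 < c.1 ∧ c.1 < u.1 ∧ wedge c u = d := by
  obtain ⟨x, y, hxy⟩ := hu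
  have hu0 : 0 < u.1 := hd0.trans hd
  have hdvd : u.1 ∣ d * y % u.1 * u.2 - d := by
    rw [Int.emod_def]
    exact ⟨-d * x - d * y / u.1 * u.2, by linear_combination d * hxy⟩
  obtain ⟨z, hz⟩ := hdvd
  refine ⟨(d * y % u.1, z), ?_, Int.emod_lt_of_pos _ hu0, ?_⟩
  · refine (Int.emod_nonneg _ hu0.ne').lt_of_ne' fun h0 => ?_
    rw [h0, zero_mul, zero_sub] at hz
    exact (Int.le_of_dvd hd0 (dvd_neg.1 ⟨z, hz⟩)).not_gt hd
  · simp only [wedge]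
    linear_combination hz

/-- The pairs `a`, `b` are neighbours of `u` in the Farey sequence of order about `u.1 / t`;
raising `t` by one replaces the longer of them by their difference. -/
theorem exists_basis_wedge_le (hu : IsCoprime u.1 u.2) {t : ℤ} (ht1 : 1 ≤ t) (ht : t < u.1) :
    ∃ a b : ℤ × ℤ, wedge a b = 1 ∧ 0 < a.1 ∧ 0 < b.1 ∧ wedge a u ∈ Set.Icc 1 t ∧
      wedge u b ∈ Set.Icc 1 t ∧ t < wedge a u + wedge u b := by
  induction t, ht1 using Int.leInduction with
  | base =>
    obtain ⟨c, hc0, hc1, hc⟩ := exists_wedge_eq hu one_pos ht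
    refine ⟨c, u - c, ?_, hc0, sub_pos.2 hc1, ?_⟩
    · rw [wedge_sub_right, wedge_self, sub_zero, hc]
    · rw [wedge_sub_right, wedge_self, wedge_skew u c, hc]
      norm_num
  | succ t ht1 ih =>
    obtain ⟨a, b, hab, ha, hb, ⟨hau1, hau⟩, ⟨hub1, hub⟩, hsum⟩ := ih (by lia)
    rcases lt_or_ge (t + 1) (wedge a u + wedge u b) with h | h
    · exact ⟨a, b, hab, ha, hb, ⟨hau1, by lia⟩, ⟨hub1, by lia⟩, h⟩
    have hsub_left : wedge (a - b) u = t + 1 := by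
      rw [wedge_sub_left, wedge_skew b u]
      lia
    have hsub_right : wedge u (b - a) = t + 1 := by
      rw [wedge_sub_right, wedge_skew u a]
      lia
    rcases lt_trichotomy a.1 b.1 with hlt | heq | hlt
    · refine ⟨a, b - a, ?_, ha, sub_pos.2 hlt, ⟨hau1, by lia⟩,
        hsub_right ▸ ⟨by lia, le_rfl⟩, by lia⟩
      rw [wedge_sub_right, hab, wedge_self, sub_zero]
    · have hdvd : u.1 ∣ t + 1 := ⟨-(a - b).2, by
        rw [← hsub_left, wedge, Prod.fst_sub, heq]
        ring⟩
      exact absurd (Int.le_of_dvd (by lia) hdvd) ht.not_ge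
    · refine ⟨a - b, b, ?_, sub_pos.2 hlt, hb, hsub_left ▸ ⟨by lia, le_rfl⟩,
        ⟨hub1, by lia⟩, by lia⟩
      rw [wedge_sub_left, hab, wedge_self, sub_zero]

theorem exists_eq_smul_isCoprime {w : ℤ × ℤ} (hw : 0 < w.1) :
    ∃ u : ℤ × ℤ, IsCoprime u.1 u.2 ∧ 0 < u.1 ∧ w = (Int.gcd w.1 w.2 : ℤ) • u := by
  obtain ⟨x, y, hxy, hx, hy⟩ := Int.exists_gcd_one (Int.gcd_pos_of_ne_zero_left w.2 hw.ne')
  refine ⟨(x, y), Int.isCoprime_iff_gcd_eq_one.2 hxy, ?_, ?_⟩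
  · rw [hx] at hw
    exact pos_of_mul_pos_left hw (by positivity)
  · ext
    · simpa [mul_comm] using hx
    · simpa [mul_comm] using hy

end Lattice

section Existence

/-- Every chord of width more than `D` bounds a cap of doubled area `D`, provided that `D = 0` or
the lattice length of the chord is at most `D`. -/
def HasCaps (D : ℤ) : Prop :=
  ∀ P Q : ℤ × ℤ, D < Q.1 - P.1 → D = 0 ∨ (Int.gcd (Q.1 - P.1) (Q.2 - P.2) : ℤ) ≤ D →
    ∃ S, IsCap P Q S D

variable {P Q a b : ℤ × ℤ} {A B D : ℤ}

theorem gcd_dvd_wedge (v w : ℤ × ℤ) : (Int.gcd v.1 v.2 : ℤ) ∣ wedge v w :=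
  dvd_sub ((Int.gcd_dvd_left _ _).mul_right _) ((Int.gcd_dvd_right _ _).mul_right _)

theorem wedge_smul_add_smul_left (hab : wedge a b = 1) :
    wedge (A • a + B • b) b = A := by
  simp only [wedge, Prod.fst_add, Prod.snd_add, Prod.smul_fst, Prod.smul_snd, smul_eq_mul] at hab ⊢
  linear_combination A * hab

theorem wedge_smul_add_smul_right (hab : wedge a b = 1) :
    wedge (A • a + B • b) a = -B := by
  simp only [wedge, Prod.fst_add, Prod.snd_add, Prod.smul_fst, Prod.smul_snd, smul_eq_mul] at hab ⊢
  linear_combination -B * hab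

theorem exists_isCap_of_le (hab : wedge a b = 1) (ha : 0 < a.1) (hb : 0 < b.1) (hA : 0 < A)
    (hAB : A ≤ B) (hne : B ≠ A + 1) (hBD : B ≤ D) (hD : D < A + B) (ih : HasCaps (D - A)) :
    ∃ S, IsCap P (P + A • a + B • b) S D := by
  set w := A • a + (B - 1) • b with hw
  have hgA : (Int.gcd w.1 w.2 : ℤ) ∣ A := wedge_smul_add_smul_left (A := A) hab ▸ gcd_dvd_wedge w b
  have hgB : (Int.gcd w.1 w.2 : ℤ) ∣ B - 1 := by
    rw [← dvd_neg, ← wedge_smul_add_smul_right (A := A) hab]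
    exact gcd_dvd_wedge w a
  have hgcd : D - A = 0 ∨ (Int.gcd w.1 w.2 : ℤ) ≤ D - A := by
    rcases hAB.eq_or_lt with rfl | hlt
    · have : (Int.gcd w.1 w.2 : ℤ) ≤ 1 := Int.le_of_dvd one_pos (by simpa using dvd_sub hgA hgB)
      lia
    · have : (Int.gcd w.1 w.2 : ℤ) ≤ B - 1 - A := Int.le_of_dvd (by lia) (dvd_sub hgB hgA)
      lia
  have hwidth : D - A < w.1 := by
    simp only [hw, Prod.fst_add, Prod.smul_fst, smul_eq_mul]
    nlinarith
  obtain ⟨S, hS⟩ := ih P (P + w) (by simpa using hwidth) (by simpa using hgcd)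
  rw [hw, ← add_assoc] at hS
  have := hS.snoc hab ha hb hA (by lia) (by lia)
  rw [sub_add_cancel, sub_add_cancel] at this
  exact ⟨_, this⟩

theorem exists_isCap_of_max_le (hab : wedge a b = 1) (ha : 0 < a.1) (hb : 0 < b.1) (hA : 0 < A)
    (hB : 0 < B) (hBA : B ≠ A + 1) (hAB : A ≠ B + 1) (hmax : max A B ≤ D) (hD : D < A + B)
    (ih : ∀ D', 0 ≤ D' → D' < D → HasCaps D') :
    ∃ S, IsCap P (P + A • a + B • b) S D := by
  obtain ⟨hAD, hBD⟩ := max_le_iff.1 hmax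
  rcases le_total A B with hle | hle
  · exact exists_isCap_of_le hab ha hb hA hle hBA hBD hD (ih _ (by lia) (by lia))
  · set Q := P + A • a + B • b with hQ
    have hflip : reflect Q + B • (b.1, -b.2) + A • (a.1, -a.2) = reflect P := by
      ext <;> simp [hQ, reflect]
    have hba : wedge (b.1, -b.2) (a.1, -a.2) = 1 := by
      simp only [wedge] at hab ⊢
      linarith
    obtain ⟨S, hS⟩ := exists_isCap_of_le (P := reflect Q) hba hb ha hB hle hAB hAD (by lia)
      (ih _ (by lia) (by lia))
    rw [hflip] at hS
    exact ⟨_, by simpa [reflect] using hS.reflect⟩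

theorem exists_isCap_of_isCoprime {u : ℤ × ℤ} (hu : IsCoprime u.1 u.2) (hD0 : 0 < D)
    (hD : D < u.1) : ∃ S, IsCap P (P + u) S D := by
  obtain ⟨c, hc0, hcu, hc⟩ := exists_wedge_eq hu hD0 hD
  have harea : signedArea P (P + c) (P + u) = D := by simp [signedArea, hc]
  have := (isCap_empty P (P + c)).insert_right (Q := P + u) (by simpa using hc0)
    (by simpa using hcu) (harea ▸ hD0) (by simp)
  rw [harea, zero_add] at this
  exact ⟨_, this⟩

theorem exists_isCap_of_two_le {u : ℤ × ℤ} (hu : IsCoprime u.1 u.2) {m : ℤ} (hm : 2 ≤ m)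
    (hmD : m ≤ D) (hD : D < m * u.1) (ih : ∀ D', 0 ≤ D' → D' < D → HasCaps D') :
    ∃ S, IsCap P (P + m • u) S D := by
  have hm0 : 0 < m := by linarith
  obtain ⟨a, b, hab, ha, hb, ⟨hau, haut⟩, ⟨hub, hubt⟩, hsum⟩ := exists_basis_wedge_le hu
    (t := D / m) ((Int.le_ediv_iff_mul_le hm0).2 (by linarith))
      (Int.ediv_lt_of_lt_mul hm0 (by linarith))
  have hmu : m • u = (m * wedge u b) • a + (m * wedge a u) • b := by
    rw [mul_smul, mul_smul, ← smul_add, ← eq_wedge_smul_add_wedge_smul hab]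
  have hne {x y : ℤ} : m * x ≠ m * y + 1 := fun h => by
    have : m ∣ 1 := ⟨x - y, by linear_combination -h⟩
    exact absurd (Int.le_of_dvd one_pos this) (by linarith)
  rw [hmu, ← add_assoc]
  refine exists_isCap_of_max_le hab ha hb (by positivity) (by positivity) hne hne
    (max_le ?_ ?_) ?_ ih
  · exact (mul_le_mul_of_nonneg_left hubt hm0.le).trans (Int.mul_ediv_self_le hm0.ne')
  · exact (mul_le_mul_of_nonneg_left haut hm0.le).trans (Int.mul_ediv_self_le hm0.ne')
  · calc D < m * (D / m + 1) := by linarith [Int.lt_ediv_add_one_mul_self D hm0]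
      _ ≤ m * (wedge a u + wedge u b) := mul_le_mul_of_nonneg_left hsum hm0.le
      _ = m * wedge u b + m * wedge a u := by ring

theorem hasCaps (hD : 0 ≤ D) : HasCaps D := by
  induction D using Int.strongRec (m := 0) with
  | lt D hneg => exact absurd hD hneg.not_ge
  | ge D _ ih =>
    intro P Q hwidth hgcd
    rcases hD.eq_or_lt with rfl | hD0
    · exact ⟨∅, isCap_empty P Q⟩
    obtain ⟨u, hu, hu0, hPQ⟩ := exists_eq_smul_isCoprime (w := Q - P) (sub_pos.2 (by linarith))
    obtain ⟨m, hm⟩ : ∃ m : ℤ, m = Int.gcd (Q.1 - P.1) (Q.2 - P.2) := ⟨_, rfl⟩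
    simp only [Prod.fst_sub, Prod.snd_sub, ← hm] at hPQ
    have hmD : m ≤ D := hm ▸ hgcd.resolve_left hD0.ne'
    have hDm : D < m * u.1 := hwidth.trans_eq (congrArg Prod.fst hPQ)
    obtain rfl : Q = P + m • u := by rw [← hPQ, add_sub_cancel]
    have hm0 : 0 < m := pos_of_mul_pos_left (hD0.trans hDm) hu0.le
    rcases (Int.add_one_le_iff.2 hm0).eq_or_lt with rfl | hm2
    · simpa using exists_isCap_of_isCoprime hu hD0 (by simpa using hDm)
    · exact exists_isCap_of_two_le hu hm2 hmD hDm fun D' hD' hlt => ih D' hlt hD'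

end Existence

section NewtonNumber

variable {T : Finset (ℕ × ℕ)} {p q : ℕ} {v w : ℝ × ℝ}

/-- The convex hull of the lattice points of `T` in the plane. -/
def latticeHull (T : Finset (ℕ × ℕ)) : Set (ℝ × ℝ) :=
  convexHull ℝ ((fun v : ℕ × ℕ => ((v.1 : ℝ), (v.2 : ℝ))) '' (T : Set (ℕ × ℕ)))

theorem mem_latticeHull {x : ℕ × ℕ} (hx : x ∈ T) : ((x.1 : ℝ), (x.2 : ℝ)) ∈ latticeHull T :=
  subset_convexHull ℝ _ (Set.mem_image_of_mem _ hx)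

theorem isCompact_latticeHull (T : Finset (ℕ × ℕ)) : IsCompact (latticeHull T) :=
  (T.finite_toSet.image _).isCompact_convexHull ℝ

theorem latticeHull_subset {K : Set (ℝ × ℝ)} (hK : Convex ℝ K)
    (hT : ∀ x ∈ T, ((x.1 : ℝ), (x.2 : ℝ)) ∈ K) : latticeHull T ⊆ K :=
  convexHull_min (Set.image_subset_iff.2 hT) hK

theorem mem_gammaPlus : v ∈ GammaPlus T ↔ ∃ w ∈ latticeHull T, w ≤ v := by
  constructor
  · rintro ⟨w, hw, z, hz, rfl⟩
    exact ⟨w, hw, le_add_of_nonneg_right hz⟩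
  · rintro ⟨w, hw, hwv⟩
    exact ⟨w, hw, v - w, sub_nonneg.2 hwv, add_sub_cancel w v⟩

theorem gammaPlus_insert {x y : ℕ × ℕ} (hx : x ∈ T) (hxy : x ≤ y) :
    GammaPlus (insert y T) = GammaPlus T := by
  have hconv : Convex ℝ (GammaPlus T) :=
    (convex_convexHull ℝ _).add (convex_Ici (0 : ℝ × ℝ))
  ext v
  refine ⟨fun hv => ?_, fun hv => ?_⟩
  · obtain ⟨w, hw, hwv⟩ := mem_gammaPlus.1 hv
    have hsub : latticeHull (insert y T) ⊆ GammaPlus T := latticeHull_subset hconv fun z hz => by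
      rcases Finset.mem_insert.1 hz with rfl | hz
      · exact mem_gammaPlus.2 ⟨_, mem_latticeHull hx, ⟨Nat.cast_le.2 hxy.1, Nat.cast_le.2 hxy.2⟩⟩
      · exact mem_gammaPlus.2 ⟨_, mem_latticeHull hz, le_rfl⟩
    obtain ⟨z, hz, hzw⟩ := mem_gammaPlus.1 (hsub hw)
    exact mem_gammaPlus.2 ⟨z, hz, hzw.trans hwv⟩
  · obtain ⟨w, hw, hwv⟩ := mem_gammaPlus.1 hv
    exact mem_gammaPlus.2 ⟨w, convexHull_mono (Set.image_mono (by simp)) hw, hwv⟩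

theorem le_of_mem_gammaPlus {a b c : ℝ} (ha : 0 ≤ a) (hb : 0 ≤ b)
    (hT : ∀ x ∈ T, c ≤ a * x.1 + b * x.2) (hv : v ∈ GammaPlus T) : c ≤ a * v.1 + b * v.2 := by
  obtain ⟨w, hw, hwv⟩ := mem_gammaPlus.1 hv
  have := latticeHull_subset (convex_le_linear a b c) hT hw
  exact this.trans (add_le_add (mul_le_mul_of_nonneg_left hwv.1 ha)
    (mul_le_mul_of_nonneg_left hwv.2 hb))

theorem axisA_eq (hmem : (p, 0) ∈ T) (hT : ∀ x ∈ T, x.2 = 0 → p ≤ x.1) : axisA T = p := by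
  refine IsLeast.csInf_eq ⟨mem_gammaPlus.2 ⟨_, mem_latticeHull hmem, by simp⟩, fun x hx => ?_⟩
  have := le_of_mem_gammaPlus (a := 1) (b := p) (c := p) zero_le_one p.cast_nonneg
    (fun y hy => ?_) hx
  · simpa using this
  · rcases Nat.eq_zero_or_pos y.2 with h0 | hpos
    · simpa [h0] using hT y hy h0
    · exact_mod_cast (Nat.le_mul_of_pos_right p hpos).trans (Nat.le_add_left _ _)

theorem axisB_eq (hmem : (0, q) ∈ T) (hT : ∀ x ∈ T, x.1 = 0 → q ≤ x.2) : axisB T = q := by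
  refine IsLeast.csInf_eq ⟨mem_gammaPlus.2 ⟨_, mem_latticeHull hmem, by simp⟩, fun x hx => ?_⟩
  have := le_of_mem_gammaPlus (a := q) (b := 1) (c := q) q.cast_nonneg zero_le_one
    (fun y hy => ?_) hx
  · simpa using this
  · rcases Nat.eq_zero_or_pos y.1 with h0 | hpos
    · simpa [h0] using hT y hy h0
    · exact_mod_cast (Nat.le_mul_of_pos_right q hpos).trans (Nat.le_add_right _ _)

/-- The triangle cut off the nonnegative quadrant by the chord from `(p, 0)` to `(0, q)`. -/
def cornerTriangle (p q : ℕ) : Set (ℝ × ℝ) := convexHull ℝ {(0, 0), ((p : ℝ), 0), (0, (q : ℝ))}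

theorem mem_cornerTriangle_iff (hp : 0 < p) (hq : 0 < q) :
    v ∈ cornerTriangle p q ↔ 0 ≤ v ∧ q * v.1 + p * v.2 ≤ p * q := by
  have hp' : (0 : ℝ) < p := Nat.cast_pos.2 hp
  have hq' : (0 : ℝ) < q := Nat.cast_pos.2 hq
  have h0 : signedArea (0, 0) ((p : ℝ), 0) (0, (q : ℝ)) = p * q := by simp [signedArea, wedge]
  have h1 : signedArea v ((p : ℝ), 0) (0, (q : ℝ)) = p * q - (q * v.1 + p * v.2) := by
    simp only [signedArea, wedge, Prod.fst_sub, Prod.snd_sub]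
    ring
  have h2 : signedArea (0, 0) v (0, (q : ℝ)) = v.1 * q := by simp [signedArea, wedge]
  have h3 : signedArea (0, 0) ((p : ℝ), 0) v = p * v.2 := by simp [signedArea, wedge]
  rw [cornerTriangle, mem_convexHull_triple_iff (h0 ▸ mul_pos hp' hq'), h1, h2, h3, sub_nonneg,
    mul_nonneg_iff_of_pos_right hq', mul_nonneg_iff_of_pos_left hp', and_comm, Prod.le_def]
  rfl

theorem mem_gammaPlus_of_le (hp : 0 < p) (hpT : (p, 0) ∈ T) (hqT : (0, q) ∈ T) (hv0 : 0 ≤ v)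
    (hv : p * q ≤ q * v.1 + p * v.2) : v ∈ GammaPlus T := by
  have hp' : (0 : ℝ) < p := Nat.cast_pos.2 hp
  rcases le_total (p : ℝ) v.1 with h | h
  · exact mem_gammaPlus.2 ⟨_, mem_latticeHull hpT, h, by simpa using hv0.2⟩
  · have hchord : (v.1 / p) • ((p : ℝ), ((0 : ℕ) : ℝ)) + (1 - v.1 / p) • (((0 : ℕ) : ℝ), (q : ℝ)) ∈
        latticeHull T := convex_convexHull ℝ _ (mem_latticeHull hpT) (mem_latticeHull hqT)
      (div_nonneg hv0.1 hp'.le) (sub_nonneg.2 ((div_le_one hp').2 h)) (by ring)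
    refine mem_gammaPlus.2 ⟨_, hchord, ?_, ?_⟩
    · simp [hp'.ne']
    · simp only [Prod.snd_add, Prod.smul_snd, smul_eq_mul, Nat.cast_zero, mul_zero, zero_add]
      rw [one_sub_div hp'.ne', div_mul_eq_mul_div, div_le_iff₀ hp']
      linarith

theorem mem_latticeHull_of_mem_gammaPlus (hp : 0 < p) (hq : 0 < q) (hpT : (p, 0) ∈ T)
    (hqT : (0, q) ∈ T) (hT : latticeHull T ⊆ cornerTriangle p q) (hv : v ∈ GammaPlus T)
    (hvT : v ∈ cornerTriangle p q) : v ∈ latticeHull T := by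
  obtain ⟨w, hw, hwv⟩ := mem_gammaPlus.1 hv
  have hp' : (0 : ℝ) < p := Nat.cast_pos.2 hp
  have hq' : (0 : ℝ) < q := Nat.cast_pos.2 hq
  obtain ⟨hw0, hwpq⟩ := (mem_cornerTriangle_iff hp hq).1 (hT hw)
  obtain ⟨-, hvpq⟩ := (mem_cornerTriangle_iff hp hq).1 hvT
  rcases hwpq.eq_or_lt with heq | hlt
  · have h1 : w.1 = v.1 := by nlinarith [hwv.1, hwv.2]
    have h2 : w.2 = v.2 := by nlinarith [hwv.1, hwv.2]
    rwa [← Prod.ext h1 h2]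
  · have hw1 : 0 ≤ w.1 := hw0.1
    have hw2 : 0 ≤ w.2 := hw0.2
    have hwp : w.1 ≤ p := by nlinarith
    have hwq : w.2 ≤ q := by nlinarith
    have h0 (z : ℝ × ℝ) : signedArea z ((p : ℝ), 0) (0, (q : ℝ)) = p * q - (q * z.1 + p * z.2) := by
      simp only [signedArea, wedge, Prod.fst_sub, Prod.snd_sub]
      ring
    have h1 : signedArea w v (0, (q : ℝ)) = (v.1 - w.1) * (q - w.2) + (v.2 - w.2) * w.1 := by
      simp only [signedArea, wedge, Prod.fst_sub, Prod.snd_sub]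
      ring
    have h2 : signedArea w ((p : ℝ), 0) v = (p - w.1) * (v.2 - w.2) + w.2 * (v.1 - w.1) := by
      simp only [signedArea, wedge, Prod.fst_sub, Prod.snd_sub]
      ring
    have hv1 := sub_nonneg.2 hwv.1
    have hv2 := sub_nonneg.2 hwv.2
    refine mem_of_convex_of_signedArea_nonneg (convex_convexHull ℝ _) hw
      (by simpa using mem_latticeHull hpT) (by simpa using mem_latticeHull hqT)
      (h0 w ▸ sub_pos.2 hlt) (h0 v ▸ sub_nonneg.2 hvpq) ?_ ?_
    · exact h1 ▸ add_nonneg (mul_nonneg hv1 (sub_nonneg.2 hwq)) (mul_nonneg hv2 hw1)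
    · exact h2 ▸ add_nonneg (mul_nonneg (sub_nonneg.2 hwp) hv2) (mul_nonneg hw2 hv1)

theorem areaS_eq (hp : 0 < p) (hq : 0 < q) (hpT : (p, 0) ∈ T) (hqT : (0, q) ∈ T)
    (hT : ∀ x ∈ T, q * x.1 + p * x.2 ≤ p * q) :
    areaS T = p * q / 2 - volume.real (latticeHull T) := by
  have hsub : latticeHull T ⊆ cornerTriangle p q :=
    latticeHull_subset (convex_convexHull ℝ _) fun x hx =>
      (mem_cornerTriangle_iff hp hq).2 ⟨⟨Nat.cast_nonneg _, Nat.cast_nonneg _⟩,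
        by simpa only [Nat.cast_add, Nat.cast_mul] using (Nat.cast_le (α := ℝ)).2 (hT x hx)⟩
  have hdiff : {v : ℝ × ℝ | 0 ≤ v.1 ∧ 0 ≤ v.2} \ GammaPlus T =
      cornerTriangle p q \ latticeHull T := by
    ext v
    refine ⟨fun ⟨hv0, hv⟩ => ⟨?_, fun h => hv (mem_gammaPlus.2 ⟨v, h, le_rfl⟩)⟩,
      fun ⟨hvT, hv⟩ => ⟨((mem_cornerTriangle_iff hp hq).1 hvT).1,
        fun h => hv (mem_latticeHull_of_mem_gammaPlus hp hq hpT hqT hsub h hvT)⟩⟩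
    refine (mem_cornerTriangle_iff hp hq).2 ⟨hv0, le_of_not_ge fun h => hv ?_⟩
    exact mem_gammaPlus_of_le hp hpT hqT hv0 h
  rw [areaS, hdiff, ← measureReal_def, measureReal_sdiff hsub
    (isCompact_latticeHull T).isClosed.measurableSet
    ((Set.toFinite _).isCompact_convexHull ℝ).measure_ne_top,
    cornerTriangle, volume_real_convexHull_triple]
  simp [signedArea, wedge]

theorem newtonNumber_eq (hp : 0 < p) (hq : 0 < q) (hpT : (p, 0) ∈ T) (hqT : (0, q) ∈ T)
    (hT : ∀ x ∈ T, q * x.1 + p * x.2 ≤ p * q) (hA : ∀ x ∈ T, x.2 = 0 → p ≤ x.1)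
    (hB : ∀ x ∈ T, x.1 = 0 → q ≤ x.2) :
    newtonNumber T = (p - 1) * (q - 1) - 2 * volume.real (latticeHull T) := by
  rw [newtonNumber, areaS_eq hp hq hpT hqT hT, axisA_eq hpT hA, axisB_eq hqT hB]
  ring

theorem exists_image_natCast_eq {S : Finset (ℤ × ℤ)} (hS : ∀ v ∈ S, 0 ≤ v) :
    ∃ S₀ : Finset (ℕ × ℕ), S₀.image (fun v => ((v.1 : ℤ), (v.2 : ℤ))) = S := by
  refine ⟨S.image fun v => (v.1.toNat, v.2.toNat), ?_⟩
  rw [Finset.image_image]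
  refine (Finset.image_congr fun v hv => ?_).trans Finset.image_id
  exact Prod.ext (Int.toNat_of_nonneg (hS v hv).1) (Int.toNat_of_nonneg (hS v hv).2)

theorem newtonNumber_of_isCap {S : Finset (ℕ × ℕ)} {D : ℤ}
    (h : IsCap (0, (q : ℤ)) ((p : ℤ), 0) (S.image fun v => ((v.1 : ℤ), (v.2 : ℤ))) D)
    (hp : 0 < p) (hq : 0 < q) (hS : ∀ v ∈ S, 0 < v.2) :
    newtonNumber (insert (0, q) (insert (p, 0) S)) = (p - 1) * (q - 1) - D := by
  have hhull : latticeHull (insert (0, q) (insert (p, 0) S)) = convexHull ℝ (toPlane ''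
      insert (0, (q : ℤ)) (insert ((p : ℤ), 0) ↑(S.image fun v => ((v.1 : ℤ), (v.2 : ℤ))))) := by
    simp [latticeHull, Set.image_insert_eq, Set.image_image, toPlane]
  have hbelow : ∀ v ∈ S, q * v.1 + p * v.2 ≤ p * q := by
    intro v hv
    have := h.signedArea_nonneg _ (Finset.mem_image_of_mem _ hv)
    simp only [signedArea, wedge, Prod.fst_sub, Prod.snd_sub] at this
    zify
    linarith
  have hfst : ∀ v ∈ S, 0 < v.1 := fun v hv =>
    Int.natCast_pos.1 (h.fst_mem _ (Finset.mem_image_of_mem _ hv)).1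
  rw [newtonNumber_eq hp hq (by simp) (by simp), hhull, h.volume_real]
  · ring
  · simpa [mul_comm] using hbelow
  · simp only [Finset.forall_mem_insert]
    exact ⟨fun h => absurd h hq.ne', fun _ => le_rfl, fun v hv h0 => absurd h0 (hS v hv).ne'⟩
  · simp only [Finset.forall_mem_insert]
    exact ⟨fun _ => le_rfl, fun h => absurd h hp.ne', fun v hv h0 => absurd h0 (hfst v hv).ne'⟩

theorem attainable_of_isCap {q' : ℕ} {S : Finset (ℤ × ℤ)} {D : ℤ} (hp : 0 < p) (hq' : q' ≤ q)
    (h : IsCap (0, (q' : ℤ)) ((p : ℤ), 0) S D) (hD : D < q') :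
    Attainable {(p, 0), (0, q)} ((p - 1) * (q' - 1) - D) := by
  have hpos : ∀ v ∈ S, 0 < v.1 ∧ 0 < v.2 := by
    intro v hv
    obtain ⟨hv0, hvp⟩ := h.fst_mem v hv
    have hle := h.signedArea_le hv
    simp only [signedArea, wedge, Prod.fst_sub, Prod.snd_sub] at hle
    refine ⟨hv0, ?_⟩
    by_contra! hv2
    nlinarith
  obtain ⟨S, rfl⟩ := exists_image_natCast_eq fun v hv => ⟨(hpos v hv).1.le, (hpos v hv).2.le⟩
  have hunion : ({(p, 0), (0, q)} ∪ insert (0, q') S : Finset (ℕ × ℕ)) =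
      insert (0, q) (insert (0, q') (insert (p, 0) S)) := by
    ext
    simp only [Finset.mem_union, Finset.mem_insert, Finset.mem_singleton]
    tauto
  refine ⟨insert (0, q') S, ?_⟩
  rw [hunion, newtonNumber, areaS, axisA, axisB,
    gammaPlus_insert (x := (0, q')) (by simp) (by simpa), ← axisB, ← axisA,
    ← areaS, ← newtonNumber, newtonNumber_of_isCap h hp]
  · push_cast
    ring
  · exact_mod_cast h.nonneg.trans_lt hD
  · exact fun v hv => Int.natCast_pos.1 (hpos _ (Finset.mem_image_of_mem _ hv)).2

end NewtonNumber

section Attainable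

variable {p q k r : ℕ} {D : ℤ}

theorem attainable_of_gcd_le {q' : ℕ} (hpq' : p ≤ q') (hq' : q' ≤ q) (hD0 : 0 ≤ D) (hDp : D < p)
    (hD : D = 0 ∨ (Nat.gcd p q' : ℤ) ≤ D) :
    Attainable {(p, 0), (0, q)} ((p - 1) * (q' - 1) - D) := by
  obtain ⟨S, hS⟩ := hasCaps hD0 (0, (q' : ℤ)) ((p : ℤ), 0) (by simpa) (by simpa using hD)
  exact attainable_of_isCap (by lia) hq' hS (by lia)

/-- The last vertex of the cap is `(p - 1, k)`, joined to `(p, 0)` by an edge of slope `-k`. -/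
theorem attainable_of_lt (hk : 0 < k) (hr : r + 2 ≤ p) (hq : k * p + r ≤ q) (hD0 : 0 ≤ D)
    (hDr : D < r) :
    Attainable {(p, 0), (0, q)} ((p - 1) * (k * p + r - 1) - (D + p - 1)) := by
  set a : ℤ × ℤ := (1, -k - 1) with ha
  set b : ℤ × ℤ := (1, -k) with hb
  set P : ℤ × ℤ := (0, (k * p + r : ℕ)) with hP
  have hab : wedge a b = 1 := by simp [ha, hb, wedge]
  set w := (r : ℤ) • a + (p - r - 1 : ℤ) • b with hw
  have hw1 : w.1 = p - 1 := by
    simp only [hw, ha, hb, Prod.fst_add, Prod.smul_fst, smul_eq_mul]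
    ring
  have hgcd : (Int.gcd w.1 w.2 : ℤ) ≤ D + (p - 1 - r) := by
    have hdvd : (Int.gcd w.1 w.2 : ℤ) ∣ p - r - 1 := by
      rw [← dvd_neg, ← wedge_smul_add_smul_right hab]
      exact gcd_dvd_wedge w a
    have := Int.le_of_dvd (by lia) hdvd
    lia
  obtain ⟨S, hS⟩ := hasCaps (D := D + (p - 1 - r)) (by lia) P (P + w)
    (by simp only [Prod.fst_add, hw1]; lia) (by simpa using .inr hgcd)
  rw [hw, ← add_assoc] at hS
  have hcap := hS.snoc hab (by simp [ha]) (by simp [hb]) (by lia) (by lia) (by lia)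
  have hend : P + (r : ℤ) • a + (p - r - 1 + 1 : ℤ) • b = ((p : ℤ), 0) := by
    ext
    · simp [hP, ha, hb]
    · simp only [hP, ha, hb, Prod.snd_add, Prod.smul_snd, smul_eq_mul]
      push_cast
      ring
  rw [hend] at hcap
  have hlt : D + (p - 1 - r) + r < ((k * p + r : ℕ) : ℤ) := by
    push_cast
    nlinarith
  convert attainable_of_isCap (by lia) hq hcap hlt using 1
  push_cast
  ring

theorem even_and_gcd_add_two_eq_two {t : ℕ} (h : 1 < Nat.gcd (t + 2) t) :
    Even t ∧ Nat.gcd (t + 2) t = 2 := by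
  rw [Nat.gcd_self_add_left] at *
  have h2 : Nat.gcd 2 t = 2 :=
    ((Nat.dvd_prime Nat.prime_two).1 (Nat.gcd_dvd_left 2 t)).resolve_left h.ne'
  exact ⟨even_iff_two_dvd.2 (Nat.gcd_eq_left_iff_dvd.1 h2), h2⟩

theorem attainable_of_lt_gcd {t : ℕ} (hk : 0 < k) (ht : 0 < t) (htp : t + 2 ≤ p)
    (hq : k * p + (t + 1) ≤ q) (hD0 : 0 < D) (hD : D < Nat.gcd p t)
    (h : ¬(Even p ∧ t + 2 = p ∧ D = 1)) :
    Attainable {(p, 0), (0, q)} ((p - 1) * (k * p + t - 1) - D) := by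
  have hgcd : Nat.gcd p t ≤ t := Nat.le_of_dvd ht (Nat.gcd_dvd_right p t)
  have hne : t + 2 ≠ p := by
    rintro rfl
    obtain ⟨heven, h2⟩ := even_and_gcd_add_two_eq_two (t := t) (by lia)
    exact h ⟨heven.add even_two, rfl, by lia⟩
  convert attainable_of_lt (r := t + 1) hk (by lia) hq hD0.le (by lia) using 1
  push_cast
  ring

theorem attainable_mul_sub {t : ℕ} (hk : 0 < k) (htr : t ≤ r) (hrp : r < p) (hq : k * p + r = q)
    (hD0 : 0 ≤ D) (hDp : D < p) (hzero : t = 0 → D = 0)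
    (hlast : t = r → D = 0 ∨ (Nat.gcd p q : ℤ) ≤ D)
    (heven : ¬(Even p ∧ r + 1 = p ∧ t + 1 = r ∧ D = 1)) :
    Attainable {(p, 0), (0, q)} ((p - 1) * (k * p + t - 1) - D) := by
  have hkp : p ≤ k * p := Nat.le_mul_of_pos_left p hk
  have hgcd : Nat.gcd p (k * p + t) = Nat.gcd p t := by simp
  by_cases hD : D = 0 ∨ (Nat.gcd p (k * p + t) : ℤ) ≤ D
  · exact_mod_cast attainable_of_gcd_le (q' := k * p + t) (by lia) (by lia) hD0 hDp hD
  · have htr : t < r := htr.lt_of_ne fun h => hD (by simpa [← hq, ← h] using hlast h)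
    obtain ⟨hDne, hDlt⟩ := not_or.1 hD
    rw [hgcd, not_le] at hDlt
    refine attainable_of_lt_gcd hk (Nat.pos_of_ne_zero (mt hzero hDne)) (by lia) (by lia)
      (hD0.lt_of_ne' hDne) hDlt ?_
    rintro ⟨hpe, htp, hD1⟩
    exact heven ⟨hpe, by lia, by lia, hD1⟩

theorem exists_eq_mul_sub {c N s : ℤ} (hc : 0 ≤ c) (hs : 0 ≤ s) (hN0 : 0 ≤ N) (hN : N ≤ c * s) :
    ∃ t d, 0 ≤ t ∧ t ≤ s ∧ 0 ≤ d ∧ d ≤ c ∧ N = c * t - d := by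
  rcases hc.eq_or_lt with rfl | hc
  · exact ⟨0, 0, le_rfl, hs, le_rfl, le_rfl, by linarith⟩
  · refine ⟨-(-N / c), -N % c, ?_, ?_, Int.emod_nonneg _ hc.ne', (Int.emod_lt_of_pos _ hc).le, ?_⟩
    · exact neg_nonneg.2 (Int.ediv_nonpos_of_nonpos_of_neg (by linarith) hc)
    · rw [neg_le, Int.le_ediv_iff_mul_le hc]
      linarith
    · linarith [Int.emod_add_mul_ediv (-N) c]

theorem gcd_mul_add_sub_one (hp : 0 < p) : Nat.gcd p (k * p + (p - 1)) = 1 := by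
  rw [Nat.gcd_mul_right_add_right, Nat.gcd_self_sub_right hp, Nat.gcd_one_right]

theorem stmt_4_general (p q k r m : ℕ) (ν : ℤ) (hpq : p ≤ q) (hrp : r < p) (hq : q = k * p + r)
    (hm : m = Nat.gcd p q) (hν : ν = ((p : ℤ) - 1) * ((q : ℤ) - 1))
    (n : ℤ) (hn1 : ((p : ℤ) - 1) * ((k : ℤ) * p - 1) ≤ n) (hn2 : n ≤ ν)
    (e1 : ¬ ((¬ Even p ∨ r ≠ p - 1) ∧ ν - m < n ∧ n < ν))
    (e2 : ¬ (Even p ∧ r = p - 1 ∧ n = ν - p)) :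
    Attainable {(p, 0), (0, q)} n := by
  subst hq hm hν
  push_cast at hn2 e1 e2
  have hk : 0 < k := Nat.pos_of_ne_zero fun hk0 => by lia
  obtain ⟨t, d, ht0, htr, hd0, hdp, hN⟩ := exists_eq_mul_sub (c := p - 1) (s := r)
    (N := n - (p - 1) * (k * p - 1)) (by lia) (by lia) (by linarith) (by linarith)
  lift t to ℕ using ht0
  obtain rfl : n = (p - 1) * (k * p + t - 1) - d := by linear_combination hN
  refine attainable_mul_sub hk (by exact_mod_cast htr) hrp rfl hd0 (by lia) ?_ ?_ ?_
  · rintro rfl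
    rw [Nat.cast_zero, add_zero] at hn1
    linarith
  · rintro rfl
    by_contra! hd
    refine e1 ⟨?_, by linarith, by lia⟩
    by_contra! hpr
    rw [hpr.2, gcd_mul_add_sub_one (by lia)] at hd
    lia
  · rintro ⟨hpe, rfl, rfl, rfl⟩
    refine e2 ⟨hpe, rfl, ?_⟩
    push_cast
    ring

end Attainable

/-- attainable Newton numbers between `ν(tr(p,kp))` and
`ν(tr(p,q))` for `4 < p ≤ q`, `p ∤ q`. -/
theorem stmt_4 (p q k r m : ℕ) (ν : ℤ)
    (hp : 4 < p) (hpq : p ≤ q) (hnd : ¬ p ∣ q)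
    (hr0 : 0 < r) (hrp : r < p) (hq : q = k * p + r)
    (hm : m = Nat.gcd p q)
    (hν : ν = ((p : ℤ) - 1) * ((q : ℤ) - 1))
    (n : ℤ) (hn1 : ((p : ℤ) - 1) * ((k : ℤ) * p - 1) ≤ n) (hn2 : n ≤ ν)
    (e1 : ¬ ((¬ Even p ∨ r ≠ p - 1) ∧ ν - m < n ∧ n < ν))
    (e2 : ¬ (Even p ∧ r = p - 1 ∧ n = ν - p)) :
    Attainable {(p, 0), (0, q)} n :=
  stmt_4_general p q k r m ν hpq hrp hq hm hν n hn1 hn2 e1 e2
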